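/- arXiv:1910.05922 — 3 statements merged into one kernel-verified Lean document; each statement's English description precedes it below -/
import Mathlib

section
/- Let r ≥ 1 be an odd integer, let d ≥ 1 be an integer, and set g = gcd(d, r). Then the set { n·r + 2·k·d : n ∈ ℤ, k ∈ ℤ, 1 ≤ k ≤ r/g − 1 } equals the set { x ∈ ℤ : g divides x and r does not divide x }. -/
/-! Write `d = g d'` and `r = g r'` with `g = gcd(d, r)`. Since `r` is odd, `2 d'` is coprime to
`r'`, so multiplication by `2 d'` permutes the residues modulo `r'`. Dividing by `g`, the left-hand
set consists of the `g y` with `y ≡ 2 k d'` modulo `r'` for some nonzero residue `k`, i.e. of the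
`g y` with `r' ∤ y`. -/

/-- For `r ≥ 1` odd, `d ≥ 1`, and `g = gcd(d, r)`,
`{ n·r + 2·k·d : n ∈ ℤ, 1 ≤ k ≤ r/g − 1 } = { x ∈ ℤ : g ∣ x and r ∤ x }`. -/
theorem atypicality_set_odd (r d : ℤ) (hr : 1 ≤ r) (hodd : Odd r) (hd : 1 ≤ d) :
    {x : ℤ | ∃ n k : ℤ, 1 ≤ k ∧ k ≤ r / (Int.gcd d r : ℤ) - 1 ∧
        x = n * r + 2 * k * d} =
      {x : ℤ | (Int.gcd d r : ℤ) ∣ x ∧ ¬ r ∣ x} := by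
  have hgN : 0 < Int.gcd d r := Int.gcd_pos_of_ne_zero_left r (by omega)
  have hg : (0 : ℤ) < (Int.gcd d r : ℤ) := by exact_mod_cast hgN
  have hcop : IsCoprime (d / (Int.gcd d r : ℤ)) (r / (Int.gcd d r : ℤ)) :=
    Int.isCoprime_iff_gcd_eq_one.mpr (Int.gcd_ediv_gcd_ediv_gcd hgN)
  obtain ⟨d', hd'⟩ := Int.gcd_dvd_left d r
  obtain ⟨r', hr'⟩ := Int.gcd_dvd_right d r
  generalize (Int.gcd d r : ℤ) = g at *
  subst hd' hr'
  rw [Int.mul_ediv_cancel_left _ hg.ne', Int.mul_ediv_cancel_left _ hg.ne'] at hcop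
  rw [Int.mul_ediv_cancel_left _ hg.ne']
  have hr0 : 0 < r' := by
    by_contra h
    nlinarith
  have h2 : IsCoprime (2 : ℤ) r' := by
    obtain ⟨m, hm⟩ := (Int.odd_mul.mp hodd).2
    exact ⟨-m, 1, by rw [hm]; ring⟩
  have hc : IsCoprime (2 * d') r' := h2.mul_left hcop
  ext x
  constructor
  · rintro ⟨n, k, hk1, hk2, rfl⟩
    refine ⟨⟨n * r' + 2 * k * d', by ring⟩, ?_⟩
    rintro ⟨m, hm⟩
    have h : r' ∣ 2 * d' * k :=
      ⟨m - n, mul_left_cancel₀ hg.ne' (by linear_combination hm)⟩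
    have := Int.le_of_dvd (by omega) (hc.symm.dvd_of_dvd_mul_left h)
    omega
  · rintro ⟨⟨y, rfl⟩, hy⟩
    obtain ⟨u, v, huv⟩ := hc
    have hk := Int.emod_add_mul_ediv (y * u) r'
    have hk0 := Int.emod_nonneg (y * u) hr0.ne'
    have hk1 := Int.emod_lt_of_pos (y * u) hr0
    -- `u` inverts `2 d'` modulo `r'`, so the required residue `k` is that of `y u`.
    have key : g * y = (y * v + (y * u / r') * (2 * d')) * (g * r') +
        2 * (y * u % r') * (g * d') := by
      linear_combination (-g * y) * huv - 2 * g * d' * hk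
    refine ⟨_, _, ?_, by omega, key⟩
    by_contra h
    have h0 : y * u % r' = 0 := by omega
    rw [h0] at key
    exact hy ⟨y * v + (y * u / r') * (2 * d'), by linear_combination key⟩
end

section
/- Let ℓ ≥ 4 be an even integer, set r = ℓ/2, let d ≥ 1 be an integer, set g = gcd(d, r) and r_α = r/g. Then for every complex number z the following are equivalent: (i) for every integer k with 1 ≤ k ≤ r_α − 1, the number 2(z − k·d) is not an integer multiple of ℓ; (ii) z lies in (ℂ ∖ gℤ) ∪ rℤ, where gℤ = { g·m : m ∈ ℤ } and rℤ = { r·m : m ∈ ℤ } are regarded as subsets of ℂ. -/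
/-!
Write `d = g d'` and `r = g rα` with `d'` and `rα` coprime. Since `ℓ = 2r`, the condition
`2(z - kd) ∈ ℓℤ` says `z ∈ kd + rℤ`, and such a `z` lies in `gℤ`. The multiples of `d` modulo `r`
form `gℤ / rℤ`, with `kd` depending only on `k` modulo `rα` and vanishing exactly when `rα ∣ k`;
hence the classes `kd + rℤ` with `1 ≤ k ≤ rα - 1` exhaust `gℤ ∖ rℤ`
(`exists_residue_of_not_dvd`) and none of them is the zero class (`not_dvd_residue`).
-/

/-- Every multiple of `g` that is not a multiple of `r` is congruent modulo `r` to `k * d` for some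
`1 ≤ k ≤ rα - 1`: Bézout gives a multiple of `d`, and its coefficient is reduced modulo `rα`. -/
theorem exists_residue_of_not_dvd {g d' rα : ℤ} (hpos : 0 < rα) (hco : IsCoprime d' rα) (m : ℤ)
    (hm : ¬ ∃ n : ℤ, g * m = g * rα * n) :
    ∃ k n : ℤ, 1 ≤ k ∧ k ≤ rα - 1 ∧ g * m = k * (g * d') + g * rα * n := by
  obtain ⟨a, b, hab⟩ := hco
  have hdiv := Int.emod_add_mul_ediv (a * m) rα
  have key : g * m = (a * m % rα) * (g * d') + g * rα * (d' * (a * m / rα) + b * m) := by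
    linear_combination (-g * m) * hab - g * d' * hdiv
  have h0 := Int.emod_nonneg (a * m) hpos.ne'
  have h1 := Int.emod_lt_of_pos (a * m) hpos
  refine ⟨a * m % rα, _, ?_, by omega, key⟩
  by_contra hlt
  have hz : a * m % rα = 0 := by omega
  exact hm ⟨_, by rw [hz, zero_mul, zero_add] at key; exact key⟩

theorem not_dvd_residue {g d' rα : ℤ} (hg : g ≠ 0) (hco : IsCoprime d' rα) {k : ℤ}
    (hk : 1 ≤ k) (hk' : k ≤ rα - 1) (m n : ℤ) :
    k * (g * d') + g * rα * m ≠ g * rα * n := by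
  intro h
  have h1 : d' * k = rα * (n - m) := by
    apply mul_left_cancel₀ hg
    linear_combination h
  have h2 : rα ∣ k := hco.symm.dvd_of_dvd_mul_left ⟨_, h1⟩
  have := Int.le_of_dvd (by omega) h2
  omega

/-- typicality criterion, even case: for `ℓ ≥ 4` even, `r = ℓ/2`,
`d ≥ 1`, `g = gcd(d, r)`, `r_α = r/g`, and any `z ∈ ℂ`:
`2(z − k·d)` is not an integer multiple of `ℓ` for all `1 ≤ k ≤ r_α − 1`
iff `z ∈ (ℂ ∖ gℤ) ∪ rℤ`. -/
theorem typicality_even (ℓ : ℤ) (hℓ : 4 ≤ ℓ) (hev : Even ℓ)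
    (r : ℤ) (hr : r = ℓ / 2) (d : ℤ) (hd : 1 ≤ d)
    (g : ℤ) (hg : g = Int.gcd d r) (rα : ℤ) (hrα : rα = r / g) (z : ℂ) :
    (∀ k : ℤ, 1 ≤ k → k ≤ rα - 1 →
        ¬ ∃ m : ℤ, 2 * (z - (k : ℂ) * (d : ℂ)) = (ℓ : ℂ) * (m : ℂ)) ↔
      z ∈ (Set.univ \ {x : ℂ | ∃ m : ℤ, x = (g : ℂ) * (m : ℂ)}) ∪
            {x : ℂ | ∃ m : ℤ, x = (r : ℂ) * (m : ℂ)} := by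
  have hℓr : ℓ = 2 * r := by
    obtain ⟨c, hc⟩ := hev
    omega
  have hrpos : 0 < r := by omega
  have hgpos : 0 < g := by
    rw [hg]
    exact_mod_cast Int.gcd_pos_of_ne_zero_right d hrpos.ne'
  obtain ⟨d', hd'⟩ : g ∣ d := hg ▸ Int.gcd_dvd_left d r
  have hrg : r = g * rα := by
    rw [hrα, Int.mul_ediv_cancel' (hg ▸ Int.gcd_dvd_right d r)]
  have hrαpos : 0 < rα := by
    rw [hrg] at hrpos
    exact pos_of_mul_pos_right hrpos hgpos.le
  have hco : IsCoprime d' rα := by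
    refine ⟨Int.gcdA d r, Int.gcdB d r, mul_left_cancel₀ hgpos.ne' ?_⟩
    have hb := Int.gcd_eq_gcd_ab d r
    rw [← hg] at hb
    linear_combination -hb - Int.gcdA d r * hd' - Int.gcdB d r * hrg
  have hℓc : (ℓ : ℂ) = 2 * (r : ℂ) := by exact_mod_cast hℓr
  simp only [Set.mem_union, Set.mem_sdiff, Set.mem_univ, true_and, Set.mem_ofPred_eq]
  constructor
  · intro h
    by_contra! hcon
    obtain ⟨⟨m, rfl⟩, hnr⟩ := hcon
    obtain ⟨k, n, hk, hk', hkn⟩ := exists_residue_of_not_dvd (g := g) hrαpos hco m (by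
      rintro ⟨n, hn⟩
      rw [← hrg] at hn
      exact hnr n (by exact_mod_cast hn))
    rw [← hd', ← hrg] at hkn
    have hc : (g : ℂ) * m = k * d + r * n := by exact_mod_cast hkn
    exact h k hk hk' ⟨n, by rw [hℓc]; linear_combination 2 * hc⟩
  · rintro h k hk hk' ⟨m, hm⟩
    have hz : z = ((k * d + r * m : ℤ) : ℂ) := by
      push_cast
      rw [hℓc] at hm
      linear_combination hm / 2
    rcases h with h | ⟨n, hn⟩
    · refine h ⟨k * d' + rα * m, ?_⟩
      rw [hz]
      have : k * d + r * m = g * (k * d' + rα * m) := by rw [hd', hrg]; ring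
      exact_mod_cast this
    · have h1 : k * d + r * m = r * n := by
        rw [hz] at hn
        exact_mod_cast hn
      rw [hd', hrg] at h1
      exact not_dvd_residue hgpos.ne' hco hk hk' m n h1
end

section
/- Let ℓ ≥ 3 be an odd integer, set r = ℓ, let d ≥ 1 be an integer, set g = gcd(d, r) and r_α = r/g. Then for every complex number z the following are equivalent: (i) for every integer k with 1 ≤ k ≤ r_α − 1, the number 2(z − k·d) is not an integer multiple of ℓ; (ii) z lies in (ℂ ∖ (g/2)ℤ) ∪ (r/2)ℤ, where (g/2)ℤ = { g·m/2 : m ∈ ℤ } and (r/2)ℤ = { r·m/2 : m ∈ ℤ } are regarded as subsets of ℂ. -/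
/-! Write `d = g e` and `ℓ = g s`, so that `s = r_α` is odd and coprime to `e`, hence coprime to `2 e`.
The condition `2 (z - k d) ∈ ℓ ℤ` forces `2 z = g m` for some integer `m`, and it then reads
`m ≡ 2 e k (mod s)`. Since `2 e` is a unit mod `s`, a solution `k` with `1 ≤ k ≤ s - 1` exists exactly
when `s ∤ m`, that is, when `z ∉ (r/2) ℤ`. -/

/-- typicality criterion, odd case: for `ℓ ≥ 3` odd, `r = ℓ`,
`d ≥ 1`, `g = gcd(d, r)`, `r_α = r/g`, and any `z ∈ ℂ`:
`2(z − k·d)` is not an integer multiple of `ℓ` for all `1 ≤ k ≤ r_α − 1`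
iff `z ∈ (ℂ ∖ (g/2)ℤ) ∪ (r/2)ℤ`. -/
theorem typicality_odd (ℓ : ℤ) (hℓ : 3 ≤ ℓ) (hodd : Odd ℓ)
    (r : ℤ) (hr : r = ℓ) (d : ℤ) (hd : 1 ≤ d)
    (g : ℤ) (hg : g = Int.gcd d r) (rα : ℤ) (hrα : rα = r / g) (z : ℂ) :
    (∀ k : ℤ, 1 ≤ k → k ≤ rα - 1 →
        ¬ ∃ m : ℤ, 2 * (z - (k : ℂ) * (d : ℂ)) = (ℓ : ℂ) * (m : ℂ)) ↔
      z ∈ (Set.univ \ {x : ℂ | ∃ m : ℤ, x = (g : ℂ) * (m : ℂ) / 2}) ∪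
            {x : ℂ | ∃ m : ℤ, x = (r : ℂ) * (m : ℂ) / 2} := by
  obtain ⟨e, he⟩ : g ∣ d := hg ▸ Int.gcd_dvd_left d r
  obtain ⟨s, hs⟩ : g ∣ r := hg ▸ Int.gcd_dvd_right d r
  have hg0 : g ≠ 0 := by
    rintro rfl
    lia
  have hgC : (g : ℂ) ≠ 0 := by exact_mod_cast hg0
  have hsr : rα = s := by rw [hrα, hs, Int.mul_ediv_cancel_left _ hg0]
  have hgpos : 0 < g := lt_of_le_of_ne (by rw [hg]; positivity) hg0.symm
  have hspos : 0 < s := by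
    have : 0 < g * s := by lia
    exact (mul_pos_iff_of_pos_left hgpos).1 this
  have hsodd : Odd s := by
    rw [← hr, hs] at hodd
    exact (Int.odd_mul.1 hodd).2
  have hes : IsCoprime e s := by
    obtain ⟨a, b, hab⟩ : ∃ a b : ℤ, g = d * a + r * b :=
      ⟨_, _, hg.trans (Int.gcd_eq_gcd_ab d r)⟩
    refine ⟨a, b, mul_left_cancel₀ hg0 ?_⟩
    linear_combination -hab - a * he - b * hs
  have h2s : IsCoprime (2 : ℤ) s := by
    obtain ⟨t, ht⟩ := hsodd
    exact ⟨-t, 1, by rw [ht]; ring⟩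
  have hcop : IsCoprime (2 * e) s := h2s.mul_left hes
  have hdC : (d : ℂ) = g * e := by exact_mod_cast he
  have hrC : (r : ℂ) = g * s := by exact_mod_cast hs
  have hlC : (ℓ : ℂ) = g * s := by rw [← hr]; exact hrC
  rw [hsr, hdC, hrC, hlC]
  constructor
  · intro h
    by_cases hz : ∃ m : ℤ, z = (g : ℂ) * (m : ℂ) / 2
    · right
      obtain ⟨m, rfl⟩ := hz
      by_cases hsm : s ∣ m
      · obtain ⟨n, rfl⟩ := hsm
        exact ⟨n, by push_cast; ring⟩
      · exfalso
        obtain ⟨u, v, huv⟩ := hcop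
        -- `u` inverts `2 e` mod `s`, so the residue of `u m` is the sought `k`.
        have hdiv := Int.emod_add_mul_ediv (u * m) s
        have hk0 : (u * m) % s ≠ 0 := by
          intro h0
          apply hsm
          refine ⟨2 * e * (u * m / s) + v * m, ?_⟩
          rw [h0] at hdiv
          linear_combination -m * huv - 2 * e * hdiv
        have hk1 := Int.emod_nonneg (u * m) hspos.ne'
        have hk2 := Int.emod_lt_of_pos (u * m) hspos
        refine h ((u * m) % s) (by lia) (by lia) ⟨v * m + 2 * e * (u * m / s), ?_⟩
        have key : m - 2 * ((u * m) % s) * e = s * (v * m + 2 * e * (u * m / s)) := by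
          linear_combination -m * huv - 2 * e * hdiv
        have keyC := congrArg (Int.cast : ℤ → ℂ) key
        push_cast at keyC ⊢
        linear_combination (g : ℂ) * keyC
    · left
      exact ⟨trivial, hz⟩
  · rintro hz k hk1 hk2 ⟨m, hm⟩
    rcases hz with ⟨-, hz⟩ | ⟨n, rfl⟩
    · apply hz
      refine ⟨2 * k * e + s * m, ?_⟩
      push_cast
      linear_combination hm / 2
    · have key : 2 * e * k = s * (n - m) := by
        have : (2 * e * k : ℂ) = s * (n - m) := by
          apply mul_left_cancel₀ hgC
          linear_combination -hm
        exact_mod_cast this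
      have hsk : s ∣ k := hcop.symm.dvd_of_dvd_mul_left ⟨n - m, key⟩
      have := Int.le_of_dvd (by lia) hsk
      lia
end
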